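/- Let a, b, b', c' be complex numbers with b and c' not nonpositive integers, and let x, y be real numbers with |x| + |y| < 1 such that |y/(1−x)| < 1. Then F₂(a; b, b'; b, c'; x, y) = (1−x)^{−a} · ₂F₁(a, b'; c'; y/(1−x)). -/

import Mathlib

noncomputable def poch (a : ℂ) (n : ℕ) : ℂ := ∏ i ∈ Finset.range n, (a + i)

/-- Gauss hypergeometric series ₂F₁(a,b;c;x). -/
noncomputable def hyp2F1 (a b c x : ℂ) : ℂ :=
  ∑' n : ℕ, poch a n * poch b n / (n.factorial * poch c n) * x ^ n

/-- Appell series F₂(a;b,b';c,c';x,y). -/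
noncomputable def appellF2 (a b b' c c' x y : ℂ) : ℂ :=
  ∑' p : ℕ × ℕ, poch a (p.1 + p.2) * poch b p.1 * poch b' p.2 /
    (p.1.factorial * p.2.factorial * poch c p.1 * poch c' p.2) * x ^ p.1 * y ^ p.2

/-!
With `c = b` the factors `(b)_m` cancel, and `(a)_{m+n} = (a)_n (a+n)_m` turns the sum over `m` into
the binomial series of `(1-x)^(-a-n)`. The factor `(1-x)^(-n)` combines with `y^n`, and what is left
is the `₂F₁` series at `y/(1-x)`.

Summing over `m` first is legitimate because `|(a+n)_m| ≤ (|a|+n)_m`: the `n`-th row is then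
dominated by `(1-|x|)^(-|a|-n)`, and `|y|/(1-|x|) < 1` lies inside the disc of convergence of `₂F₁`.
-/

lemma ascPochhammer_eval_add {S : Type*} [CommSemiring S] (a : S) (n m : ℕ) :
    (ascPochhammer S (n + m)).eval a =
      (ascPochhammer S n).eval a * (ascPochhammer S m).eval (a + n) := by
  simp [← ascPochhammer_mul, Polynomial.eval_comp]

lemma ascPochhammer_eval_eq_prod_range {S : Type*} [CommSemiring S] (a : S) (n : ℕ) :
    (ascPochhammer S n).eval a = ∏ i ∈ Finset.range n, (a + i) := by
  induction n with
  | zero => simp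
  | succ n ih => rw [ascPochhammer_succ_eval, ih, Finset.prod_range_succ]

lemma norm_ascPochhammer_eval_le {R : Type*} [NormedRing R] [NormOneClass R] {a : R} {r : ℝ}
    (ha : ‖a‖ ≤ r) (n : ℕ) : ‖(ascPochhammer R n).eval a‖ ≤ (ascPochhammer ℝ n).eval r := by
  induction n with
  | zero => simp
  | succ n ih =>
    have hfactor : ‖a + n‖ ≤ r + n :=
      (norm_add_le _ _).trans (add_le_add ha (by simpa using Nat.norm_cast_le (α := R) n))
    rw [ascPochhammer_succ_eval, ascPochhammer_succ_eval]
    exact (norm_mul_le _ _).trans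
      (mul_le_mul ih hfactor (norm_nonneg _) ((norm_nonneg _).trans ih))

lemma choose_add_natCast_sub_one_eq_ascPochhammer_div {K : Type*} [Field K] [CharZero K]
    (a : K) (n : ℕ) :
    Ring.choose (a + n - 1) n = (ascPochhammer K n).eval a / n.factorial := by
  rw [eq_div_iff (Nat.cast_ne_zero.2 n.factorial_ne_zero), ← Ring.multichoose_eq, mul_comm,
    ← nsmul_eq_mul, Ring.factorial_nsmul_multichoose_eq_ascPochhammer,
    Polynomial.ascPochhammer_smeval_eq_eval]

section BinomialSeries

lemma hasSum_one_sub_rpow_neg (a : ℝ) {x : ℝ} (hx : |x| < 1) :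
    HasSum (fun n : ℕ => (ascPochhammer ℝ n).eval a / n.factorial * x ^ n) ((1 - x) ^ (-a)) := by
  have h := (Real.one_div_one_sub_rpow_hasFPowerSeriesOnBall_zero a).hasSum (y := x)
    (by simpa [← ofReal_norm] using hx)
  have hx1 : 0 ≤ 1 - x := by linarith [le_abs_self x]
  simpa [choose_add_natCast_sub_one_eq_ascPochhammer_div, Real.rpow_neg hx1, mul_comm] using h

lemma hasSum_one_sub_cpow_neg (a : ℂ) {x : ℂ} (hx : ‖x‖ < 1) :
    HasSum (fun n : ℕ => (ascPochhammer ℂ n).eval a / n.factorial * x ^ n) ((1 - x) ^ (-a)) := by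
  have h := (Complex.one_div_one_sub_cpow_hasFPowerSeriesOnBall_zero a).hasSum (y := x)
    (by simpa [← ofReal_norm] using hx)
  simpa [choose_add_natCast_sub_one_eq_ascPochhammer_div, Complex.cpow_neg, mul_comm] using h

variable {𝕂 : Type*} [RCLike 𝕂] {a x : 𝕂}

lemma norm_binomial_term_le {r : ℝ} (ha : ‖a‖ ≤ r) (n : ℕ) :
    ‖(ascPochhammer 𝕂 n).eval a / n.factorial * x ^ n‖ ≤
      (ascPochhammer ℝ n).eval r / n.factorial * ‖x‖ ^ n := by
  rw [norm_mul, norm_div, norm_pow, RCLike.norm_natCast]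
  gcongr
  exact norm_ascPochhammer_eval_le ha n

lemma summable_norm_binomial_term (a : 𝕂) (hx : ‖x‖ < 1) :
    Summable fun n : ℕ => ‖(ascPochhammer 𝕂 n).eval a / n.factorial * x ^ n‖ :=
  .of_nonneg_of_le (fun _ => norm_nonneg _) (norm_binomial_term_le le_rfl)
    (hasSum_one_sub_rpow_neg ‖a‖ (by simpa using hx)).summable

lemma tsum_norm_binomial_term_le {r : ℝ} (ha : ‖a‖ ≤ r) (hx : ‖x‖ < 1) :
    ∑' n : ℕ, ‖(ascPochhammer 𝕂 n).eval a / n.factorial * x ^ n‖ ≤ (1 - ‖x‖) ^ (-r) :=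
  hasSum_le (norm_binomial_term_le ha) (summable_norm_binomial_term a hx).hasSum
    (hasSum_one_sub_rpow_neg r (by simpa using hx))

end BinomialSeries

lemma summable_mul_shifted_binomial_term {𝕂 : Type*} [RCLike 𝕂] {u : ℕ → 𝕂} {x : 𝕂} (a : 𝕂)
    (hx : ‖x‖ < 1) (hu : Summable fun n => ‖u n‖ / (1 - ‖x‖) ^ n) :
    Summable fun p : ℕ × ℕ =>
      u p.1 * ((ascPochhammer 𝕂 p.2).eval (a + p.1) / p.2.factorial * x ^ p.2) := by
  have hx0 : 0 < 1 - ‖x‖ := sub_pos.2 hx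
  refine Summable.of_norm ((summable_prod_of_nonneg fun _ => norm_nonneg _).2 ⟨fun n => ?_, ?_⟩)
  · simpa only [norm_mul (u n)] using (summable_norm_binomial_term (a + n) hx).mul_left ‖u n‖
  · refine .of_nonneg_of_le (fun n => tsum_nonneg fun m => norm_nonneg _) (fun n => ?_)
      (hu.mul_left ((1 - ‖x‖) ^ (-‖a‖)))
    have ha : ‖a + n‖ ≤ ‖a‖ + n := (norm_add_le _ _).trans_eq (by simp)
    simp only [norm_mul (u n), tsum_mul_left]
    calc ‖u n‖ * ∑' m : ℕ, ‖(ascPochhammer 𝕂 m).eval (a + n) / m.factorial * x ^ m‖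
        ≤ ‖u n‖ * (1 - ‖x‖) ^ (-(‖a‖ + n)) := by gcongr; exact tsum_norm_binomial_term_le ha hx
      _ = (1 - ‖x‖) ^ (-‖a‖) * (‖u n‖ / (1 - ‖x‖) ^ n) := by
        rw [neg_add, Real.rpow_add hx0, Real.rpow_neg hx0.le (n : ℝ), Real.rpow_natCast]
        ring

lemma tsum_mul_shifted_binomial_term {u : ℕ → ℂ} {x : ℂ} (a : ℂ) (hx : ‖x‖ < 1)
    (hu : Summable fun n => ‖u n‖ / (1 - ‖x‖) ^ n) :
    ∑' p : ℕ × ℕ, u p.1 * ((ascPochhammer ℂ p.2).eval (a + p.1) / p.2.factorial * x ^ p.2) =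
      (1 - x) ^ (-a) * ∑' n, u n / (1 - x) ^ n := by
  have hx1 : 1 - x ≠ 0 := sub_ne_zero.2 fun h => by simp [← h] at hx
  have hrows := (summable_mul_shifted_binomial_term a hx hu).hasSum.prod_fiberwise fun n =>
    (hasSum_one_sub_cpow_neg (a + n) hx).mul_left (u n)
  rw [← hrows.tsum_eq, ← tsum_mul_left]
  refine tsum_congr fun n => ?_
  rw [neg_add, Complex.cpow_add _ _ hx1, Complex.cpow_neg _ (n : ℂ), Complex.cpow_natCast]
  ring

section OrdinaryHypergeometric

variable {𝕂 : Type*} [RCLike 𝕂] (a b c : 𝕂)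

lemma one_le_radius_ordinaryHypergeometricSeries (𝔸 : Type*) [NormedDivisionRing 𝔸]
    [NormedAlgebra 𝕂 𝔸] : 1 ≤ (ordinaryHypergeometricSeries 𝔸 a b c).radius := by
  by_cases h : ∀ k : ℕ, (k : 𝕂) ≠ -a ∧ (k : 𝕂) ≠ -b ∧ (k : 𝕂) ≠ -c
  · exact (ordinaryHypergeometricSeries_radius_eq_one 𝔸 a b c h).ge
  · obtain ⟨k, hk⟩ : ∃ k : ℕ, a = -k ∨ b = -k ∨ c = -k := by
      simp only [not_forall, not_and_or, not_not] at h
      simpa only [eq_neg_iff_add_eq_zero, add_comm] using h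
    rcases hk with rfl | rfl | rfl
    · simp [ordinaryHypergeometric_radius_top_of_neg_nat₁]
    · simp [ordinaryHypergeometric_radius_top_of_neg_nat₂]
    · simp [ordinaryHypergeometric_radius_top_of_neg_nat₃]

lemma summable_norm_ordinaryHypergeometricCoefficient_mul_pow {r : ℝ} (hr0 : 0 ≤ r)
    (hr1 : r < 1) : Summable fun n => ‖ordinaryHypergeometricCoefficient a b c n‖ * r ^ n := by
  lift r to NNReal using hr0
  have hr : (r : ENNReal) < (ordinaryHypergeometricSeries 𝕂 a b c).radius :=
    lt_of_lt_of_le (by exact_mod_cast hr1) (one_le_radius_ordinaryHypergeometricSeries a b c 𝕂)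
  simpa only [ordinaryHypergeometricSeries, FormalMultilinearSeries.ofScalars_norm] using
    FormalMultilinearSeries.summable_norm_mul_pow _ hr

end OrdinaryHypergeometric

lemma poch_eq_ascPochhammer_eval (a : ℂ) (n : ℕ) : poch a n = (ascPochhammer ℂ n).eval a :=
  (ascPochhammer_eval_eq_prod_range a n).symm

lemma poch_add (a : ℂ) (n m : ℕ) : poch a (n + m) = poch a n * poch (a + n) m := by
  simp only [poch_eq_ascPochhammer_eval, ascPochhammer_eval_add]

lemma poch_ne_zero {a : ℂ} (ha : ∀ n : ℕ, a ≠ -(n : ℂ)) (n : ℕ) : poch a n ≠ 0 :=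
  Finset.prod_ne_zero_iff.2 fun i _ h => ha i (eq_neg_of_add_eq_zero_left h)

lemma hyp2F1_eq_tsum_ordinaryHypergeometricCoefficient (a b c x : ℂ) :
    hyp2F1 a b c x = ∑' n, ordinaryHypergeometricCoefficient a b c n * x ^ n := by
  refine tsum_congr fun n => ?_
  simp only [ordinaryHypergeometricCoefficient, poch_eq_ascPochhammer_eval]
  ring

lemma appellF2_eq_tsum_of_c_eq_b (a b' c' x y : ℂ) {b : ℂ} (hb : ∀ n : ℕ, b ≠ -(n : ℂ)) :
    appellF2 a b b' b c' x y =
      ∑' p : ℕ × ℕ, ordinaryHypergeometricCoefficient a b' c' p.1 * y ^ p.1 *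
        ((ascPochhammer ℂ p.2).eval (a + p.1) / p.2.factorial * x ^ p.2) := by
  rw [appellF2, ← (Equiv.prodComm ℕ ℕ).tsum_eq]
  refine tsum_congr fun p => ?_
  have hbm := poch_ne_zero hb p.2
  simp only [Equiv.prodComm_apply, Prod.fst_swap, Prod.snd_swap, add_comm p.2 p.1, poch_add,
    ordinaryHypergeometricCoefficient, ← poch_eq_ascPochhammer_eval]
  field_simp

theorem appellF2_reduction_c_eq_b_general (a b b' c' x y : ℂ)
    (hb : ∀ n : ℕ, b ≠ -(n : ℂ)) (_hc' : ∀ n : ℕ, c' ≠ -(n : ℂ)) (hxy : ‖x‖ + ‖y‖ < 1) :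
    appellF2 a b b' b c' x y = (1 - x) ^ (-a) * hyp2F1 a b' c' (y / (1 - x)) := by
  have hx : ‖x‖ < 1 := by linarith [norm_nonneg y]
  have hx0 : 0 < 1 - ‖x‖ := sub_pos.2 hx
  have hr : ‖y‖ / (1 - ‖x‖) < 1 := (div_lt_one hx0).2 (by linarith)
  have hu : Summable fun n =>
      ‖ordinaryHypergeometricCoefficient a b' c' n * y ^ n‖ / (1 - ‖x‖) ^ n := by
    simpa only [norm_mul _ (y ^ _), norm_pow, div_pow, mul_div_assoc] using
      summable_norm_ordinaryHypergeometricCoefficient_mul_pow a b' c' (by positivity) hr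
  rw [appellF2_eq_tsum_of_c_eq_b a b' c' x y hb, tsum_mul_shifted_binomial_term a hx hu,
    hyp2F1_eq_tsum_ordinaryHypergeometricCoefficient]
  simp only [div_pow, mul_div_assoc]

theorem appellF2_reduction_c_eq_b (a b b' c' : ℂ) (x y : ℝ)
    (hb : ∀ n : ℕ, b ≠ -(n : ℂ)) (hc' : ∀ n : ℕ, c' ≠ -(n : ℂ))
    (hxy : |x| + |y| < 1) (hy' : |y / (1 - x)| < 1) :
    appellF2 a b b' b c' x y =
      ((1 : ℂ) - x) ^ (-a) * hyp2F1 a b' c' ((y : ℂ) / (1 - x)) := by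
  exact appellF2_reduction_c_eq_b_general a b b' c' x y hb hc' (by simpa using hxy)
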